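/- Let J₀ be a skew-symmetric orthogonal matrix on ℝ^{2L} (so J₀ᵀ = -J₀ and J₀² = -1) and let A ∈ O(2L) be an orthogonal matrix with J₁ = A J₀ Aᵀ. Then (-1)^{(1/2)·dim ker(J₀ + J₁)} = sgn(det A). -/

import Mathlib

open Matrix

/-!
Write `J₁ = A J₀ Aᵀ` and `K = ker (J₀ + J₁)`; the argument is a descent on `dim K`.

If `K = 0`, the homotopy `A - t J₀ A J₀`, `0 ≤ t ≤ 1`, stays invertible: for `t < 1` because `A` and
`J₀ A J₀` are both isometric, and at `t = 1` because `A - J₀ A J₀ = -(J₀ + J₁) A J₀`. So `det A` has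
the sign of the determinant of the endpoint, which commutes with `J₀`, hence is complex linear for
the complex structure `J₀`: its real determinant is the squared modulus of its complex determinant.
Thus `det A > 0`.

If `v ∈ K` is a unit vector and `R` is the reflection in `vᗮ`, then replacing `A` by `R A` changes
the sign of `det A` and adds `x ↦ 2 (⟪v, x⟫ J₀ v - ⟪J₀ v, x⟫ v)` to the skew operator `J₀ + J₁`.
Since `v` and `J₀ v` are orthonormal in `K`, which is orthogonal to the range of `J₀ + J₁`, the new
kernel is the orthogonal complement of `{v, J₀ v}` in `K`, whose dimension is `dim K - 2`.
-/

open Module (End finrank)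
open scoped RealInnerProductSpace

section Determinant

theorem det_nonneg_of_commute {V : Type*} [AddCommGroup V] [Module ℝ V] {J f : End ℝ V}
    (hJ : J * J = -1) (hf : Commute f J) : 0 ≤ LinearMap.det f := by
  let φ : ℂ →ₐ[ℝ] End ℝ V := Complex.liftAux J hJ
  let _ : Module ℂ V := Module.compHom V φ.toRingHom
  have smul_def (z : ℂ) (x : V) : z • x = z.re • x + z.im • J x := rfl
  have : IsScalarTower ℝ ℂ V := ⟨fun r z x ↦ by simp [smul_def, mul_smul]⟩
  have map_J (x : V) : f (J x) = J (f x) := congr($hf.eq x)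
  let g : V →ₗ[ℂ] V := { f with map_smul' := fun z x ↦ by simp [smul_def, map_J] }
  calc 0 ≤ Complex.normSq (LinearMap.det g) := Complex.normSq_nonneg _
    _ = LinearMap.det (g.restrictScalars ℝ) := by
      rw [LinearMap.det_restrictScalars, Algebra.norm_complex_apply]
    _ = LinearMap.det f := rfl

theorem continuous_det_add_smul {R V : Type*} [CommRing R] [TopologicalSpace R]
    [IsTopologicalRing R] [AddCommGroup V] [Module R V] [Module.Free R V] [Module.Finite R V]
    (f g : End R V) : Continuous fun t : R ↦ LinearMap.det (f + t • g) := by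
  simp_rw [← LinearMap.det_toMatrix (Module.Free.chooseBasis R V), map_add, map_smul]
  fun_prop

theorem ker_add_smul_eq_bot {V W : Type*} [AddCommGroup V] [Module ℝ V] [NormedAddCommGroup W]
    [NormedSpace ℝ W] {f g : V →ₗ[ℝ] W} (hle : ∀ x, ‖g x‖ ≤ ‖f x‖)
    (hker : LinearMap.ker (f + g) = ⊥) {t : ℝ} (ht : t ∈ Set.Icc 0 1) :
    LinearMap.ker (f + t • g) = ⊥ := by
  rcases ht.2.eq_or_lt with rfl | ht1
  · rwa [one_smul]
  refine LinearMap.ker_eq_bot'.2 fun x hx ↦ ?_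
  have hfx : ‖f x‖ ≤ t * ‖f x‖ := calc
    ‖f x‖ = ‖t • g x‖ := by rw [eq_neg_of_add_eq_zero_left hx, norm_neg, LinearMap.smul_apply]
    _ = t * ‖g x‖ := norm_smul_of_nonneg ht.1 _
    _ ≤ t * ‖f x‖ := by gcongr; exacts [ht.1, hle x]
  have hf0 : ‖f x‖ = 0 := by nlinarith [norm_nonneg (f x)]
  have hg0 : ‖g x‖ = 0 := le_antisymm (hf0 ▸ hle x) (norm_nonneg _)
  refine LinearMap.ker_eq_bot'.1 hker x ?_
  rw [LinearMap.add_apply, norm_eq_zero.1 hf0, norm_eq_zero.1 hg0, add_zero]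

theorem det_mul_det_add_pos {V : Type*} [NormedAddCommGroup V] [NormedSpace ℝ V]
    [FiniteDimensional ℝ V] {f g : End ℝ V} (hle : ∀ x, ‖g x‖ ≤ ‖f x‖)
    (hker : LinearMap.ker (f + g) = ⊥) : 0 < LinearMap.det f * LinearMap.det (f + g) := by
  let d : ℝ → ℝ := fun t ↦ LinearMap.det (f + t • g)
  have d_zero : d 0 = LinearMap.det f := by simp [d]
  have d_one : d 1 = LinearMap.det (f + g) := by simp [d]
  have d_ne_zero {t : ℝ} (ht : t ∈ Set.uIcc 0 1) : d t ≠ 0 := by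
    rw [Set.uIcc_of_le zero_le_one] at ht
    exact fun h ↦ LinearMap.det_eq_zero_iff_ker_ne_bot.1 h (ker_add_smul_eq_bot hle hker ht)
  rw [← d_zero, ← d_one]
  by_contra! hneg
  have zero_mem : (0 : ℝ) ∈ Set.uIcc (d 0) (d 1) := by
    rw [Set.mem_uIcc]
    rcases mul_nonpos_iff.1 hneg with h | h
    exacts [.inr h.symm, .inl h]
  obtain ⟨t, ht, hdt⟩ :=
    intermediate_value_uIcc (continuous_det_add_smul f g).continuousOn zero_mem
  exact d_ne_zero ht hdt

end Determinant

section InnerProductSpace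

variable {V : Type*} [NormedAddCommGroup V] [InnerProductSpace ℝ V]

theorem inner_left_of_isSkewAdjoint {S : End ℝ V} (hS : (innerₗ V).IsSkewAdjoint S) (x y : V) :
    ⟪S x, y⟫ = -⟪x, S y⟫ := by
  simpa using hS x y

theorem inner_apply_self_of_isSkewAdjoint {S : End ℝ V} (hS : (innerₗ V).IsSkewAdjoint S) (x : V) :
    ⟪S x, x⟫ = 0 := by
  linarith [inner_left_of_isSkewAdjoint hS x x, real_inner_comm x (S x)]

theorem isSkewAdjoint_conj {S : End ℝ V} (hS : (innerₗ V).IsSkewAdjoint S) (A : V ≃ₗᵢ[ℝ] V) :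
    (innerₗ V).IsSkewAdjoint (A.toLinearEquiv.conj S) := fun x y ↦ by
  have := inner_left_of_isSkewAdjoint hS (A.symm x) (A.symm y)
  rw [← A.inner_map_map, ← A.inner_map_map (A.symm x)] at this
  simpa [LinearEquiv.conj_apply_apply] using this

theorem conj_reflection_of_isSkewAdjoint {S : End ℝ V} (hS : (innerₗ V).IsSkewAdjoint S) {v : V}
    (hv : ‖v‖ = 1) (x : V) :
    (ℝ ∙ v)ᗮ.reflection.toLinearEquiv.conj S x =
      S x + (2 : ℝ) • (⟪S v, x⟫ • v - ⟪v, x⟫ • S v) := by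
  have reflection_eq (y : V) : (ℝ ∙ v)ᗮ.reflection y = y - (2 * ⟪v, y⟫) • v := by
    simp only [Submodule.reflection_orthogonal_apply, Submodule.reflection_singleton_apply, hv,
      Real.ringHom_apply, one_pow, div_one]
    module
  have inner_v_S_v : ⟪v, S v⟫ = 0 := by rw [real_inner_comm, inner_apply_self_of_isSkewAdjoint hS]
  simp only [LinearEquiv.conj_apply_apply, LinearIsometryEquiv.coe_symm_toLinearEquiv,
    LinearIsometryEquiv.coe_toLinearEquiv, Submodule.reflection_symm, reflection_eq, map_sub,
    map_smul, inner_v_S_v, mul_zero, inner_left_of_isSkewAdjoint hS v x]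
  module

theorem ker_add_rank_two_of_isSkewAdjoint {S T : End ℝ V} (hS : (innerₗ V).IsSkewAdjoint S)
    {u v : V} (hu : S u = 0) (hv : S v = 0) (huv : LinearIndependent ℝ ![u, v]) {c : ℝ}
    (hc : c ≠ 0) (hT : ∀ x, T x = S x + c • (⟪v, x⟫ • u - ⟪u, x⟫ • v)) :
    LinearMap.ker T = (Submodule.span ℝ {u, v})ᗮ ⊓ LinearMap.ker S := by
  have mem_orthogonal (x : V) : x ∈ (Submodule.span ℝ {u, v})ᗮ ↔ ⟪u, x⟫ = 0 ∧ ⟪v, x⟫ = 0 := by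
    rw [Submodule.span_insert, ← Submodule.inf_orthogonal]
    simp [Submodule.mem_orthogonal_singleton_iff_inner_right]
  ext x
  rw [Submodule.mem_inf, mem_orthogonal, LinearMap.mem_ker, LinearMap.mem_ker, hT]
  constructor
  · intro hx
    have hSx : S x = 0 := by
      have inner_u : ⟪S x, u⟫ = 0 := by simp [inner_left_of_isSkewAdjoint hS, hu]
      have inner_v : ⟪S x, v⟫ = 0 := by simp [inner_left_of_isSkewAdjoint hS, hv]
      rw [← inner_self_eq_zero (𝕜 := ℝ)]
      simpa [inner_add_right, inner_sub_right, inner_smul_right, inner_u, inner_v]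
        using congr(⟪S x, $hx⟫)
    rw [hSx, zero_add, smul_eq_zero_iff_right hc, sub_eq_add_neg, ← neg_smul] at hx
    obtain ⟨hvx, hux⟩ := LinearIndependent.pair_iff.1 huv _ _ hx
    exact ⟨⟨neg_eq_zero.1 hux, hvx⟩, hSx⟩
  · rintro ⟨⟨hux, hvx⟩, hSx⟩
    simp [hux, hvx, hSx]

/-- An orthogonal complex structure on a real inner product space: the coordinate-free form of a
real matrix that is both orthogonal and skew-symmetric, orthogonality being encoded, given
skewness, by `J * J = -1`. -/
structure IsOrthogonalComplexStructure (J : End ℝ V) : Prop where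
  mul_self : J * J = -1
  isSkewAdjoint : (innerₗ V).IsSkewAdjoint J

namespace IsOrthogonalComplexStructure

variable {J : End ℝ V}

theorem apply_apply (hJ : IsOrthogonalComplexStructure J) (x : V) : J (J x) = -x :=
  congr($hJ.mul_self x)

theorem norm_map (hJ : IsOrthogonalComplexStructure J) (x : V) : ‖J x‖ = ‖x‖ := by
  rw [norm_eq_sqrt_real_inner, inner_left_of_isSkewAdjoint hJ.isSkewAdjoint, hJ.apply_apply,
    inner_neg_right, neg_neg, ← norm_eq_sqrt_real_inner]

theorem conj (hJ : IsOrthogonalComplexStructure J) (A : V ≃ₗᵢ[ℝ] V) :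
    IsOrthogonalComplexStructure (A.toLinearEquiv.conj J) where
  mul_self := by
    ext x
    simp [LinearEquiv.conj_apply_apply, hJ.apply_apply]
  isSkewAdjoint := isSkewAdjoint_conj hJ.isSkewAdjoint A

theorem orthonormal_pair (hJ : IsOrthogonalComplexStructure J) {v : V} (hv : ‖v‖ = 1) :
    Orthonormal ℝ ![J v, v] := by
  simp [orthonormal_vecCons_iff, hJ.norm_map, hv,
    inner_apply_self_of_isSkewAdjoint hJ.isSkewAdjoint]

theorem det_pos_of_ker_add_conj_eq_bot [FiniteDimensional ℝ V]
    (hJ : IsOrthogonalComplexStructure J) (A : V ≃ₗᵢ[ℝ] V)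
    (hker : LinearMap.ker (J + A.toLinearEquiv.conj J) = ⊥) :
    0 < LinearMap.det A.toLinearMap := by
  let a : End ℝ V := A.toLinearMap
  let M : End ℝ V := a - J * a * J
  have commute_M : Commute M J := by
    calc (a - J * a * J) * J = a * J - J * a * (J * J) := by noncomm_ring
      _ = J * a - J * J * a * J := by rw [hJ.mul_self]; noncomm_ring
      _ = J * (a - J * a * J) := by noncomm_ring
  have ker_M : LinearMap.ker M = ⊥ := by
    refine LinearMap.ker_eq_bot'.2 fun x hx ↦ ?_
    have hAJx : A (J x) = 0 := LinearMap.ker_eq_bot'.1 hker _ <| calc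
      (J + A.toLinearEquiv.conj J) (A (J x)) = -M x := by
        simp [M, a, LinearEquiv.conj_apply_apply, hJ.apply_apply, sub_eq_add_neg]
      _ = 0 := by rw [hx, neg_zero]
    rw [← norm_eq_zero, ← hJ.norm_map, ← A.norm_map, hAJx, norm_zero]
  have det_M_nonneg : 0 ≤ LinearMap.det M := det_nonneg_of_commute hJ.mul_self commute_M
  have det_mul_det_M_pos : 0 < LinearMap.det a * LinearMap.det M := by
    have norm_le (x : V) : ‖(-(J * a * J)) x‖ ≤ ‖a x‖ := by simp [a, hJ.norm_map]
    simp only [M, sub_eq_add_neg] at ker_M ⊢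
    exact det_mul_det_add_pos norm_le ker_M
  exact pos_of_mul_pos_left det_mul_det_M_pos det_M_nonneg

theorem map_mem_ker_add {J₁ : End ℝ V} (hJ : IsOrthogonalComplexStructure J)
    (hJ₁ : IsOrthogonalComplexStructure J₁) {v : V} (hv : v ∈ LinearMap.ker (J + J₁)) :
    J v ∈ LinearMap.ker (J + J₁) := by
  have J_v : J v = -J₁ v := eq_neg_of_add_eq_zero_left hv
  rw [LinearMap.mem_ker, LinearMap.add_apply, hJ.apply_apply, J_v, map_neg, hJ₁.apply_apply,
    neg_neg, neg_add_cancel]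

theorem ker_add_conj_trans_reflection (hJ : IsOrthogonalComplexStructure J) (A : V ≃ₗᵢ[ℝ] V) {v : V}
    (hv : ‖v‖ = 1) (hvK : v ∈ LinearMap.ker (J + A.toLinearEquiv.conj J)) :
    LinearMap.ker (J + (A.trans (ℝ ∙ v)ᗮ.reflection).toLinearEquiv.conj J) =
      (Submodule.span ℝ {J v, v})ᗮ ⊓ LinearMap.ker (J + A.toLinearEquiv.conj J) := by
  let J₁ := A.toLinearEquiv.conj J
  have hJ₁ : IsOrthogonalComplexStructure J₁ := hJ.conj A
  have J₁_v : J₁ v = -J v := eq_neg_of_add_eq_zero_right hvK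
  have hJvK : (J + J₁) (J v) = 0 := hJ.map_mem_ker_add hJ₁ hvK
  have skew : (innerₗ V).IsSkewAdjoint (J + J₁) := by
    rw [LinearMap.IsSkewAdjoint, neg_add]
    exact hJ.isSkewAdjoint.add hJ₁.isSkewAdjoint
  refine ker_add_rank_two_of_isSkewAdjoint skew hJvK hvK (hJ.orthonormal_pair hv).linearIndependent
    two_ne_zero fun x ↦ ?_
  calc
    (J + (A.trans (ℝ ∙ v)ᗮ.reflection).toLinearEquiv.conj J) x
      = J x + (ℝ ∙ v)ᗮ.reflection.toLinearEquiv.conj J₁ x := rfl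
    _ = (J + J₁) x + (2 : ℝ) • (⟪v, x⟫ • J v - ⟪J v, x⟫ • v) := by
      rw [conj_reflection_of_isSkewAdjoint hJ₁.isSkewAdjoint hv, J₁_v, inner_neg_left,
        LinearMap.add_apply]
      module

theorem finrank_ker_add_conj_trans_reflection [FiniteDimensional ℝ V]
    (hJ : IsOrthogonalComplexStructure J) (A : V ≃ₗᵢ[ℝ] V) {v : V}
    (hv : ‖v‖ = 1) (hvK : v ∈ LinearMap.ker (J + A.toLinearEquiv.conj J)) :
    finrank ℝ (LinearMap.ker (J + A.toLinearEquiv.conj J)) =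
      finrank ℝ (LinearMap.ker (J + (A.trans (ℝ ∙ v)ᗮ.reflection).toLinearEquiv.conj J)) + 2 := by
  have finrank_span : finrank ℝ (Submodule.span ℝ {J v, v}) = 2 := by
    have := finrank_span_eq_card (hJ.orthonormal_pair hv).linearIndependent
    rwa [range_cons_cons_empty, Fintype.card_fin] at this
  have span_le : Submodule.span ℝ {J v, v} ≤ LinearMap.ker (J + A.toLinearEquiv.conj J) :=
    Submodule.span_le.2 <| Set.pair_subset (hJ.map_mem_ker_add (hJ.conj A) hvK) hvK
  rw [← Submodule.finrank_add_inf_finrank_orthogonal span_le, finrank_span,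
    hJ.ker_add_conj_trans_reflection A hv hvK, add_comm]

end IsOrthogonalComplexStructure

theorem det_trans_reflection [FiniteDimensional ℝ V] (A : V ≃ₗᵢ[ℝ] V) {v : V} (hv : v ≠ 0) :
    LinearMap.det (A.trans (ℝ ∙ v)ᗮ.reflection).toLinearMap = -LinearMap.det A.toLinearMap := by
  change LinearMap.det ((ℝ ∙ v)ᗮ.reflection.toLinearMap ∘ₗ A.toLinearMap) = _
  rw [LinearMap.det_comp, Submodule.det_reflection, Submodule.orthogonal_orthogonal,
    finrank_span_singleton hv, pow_one, neg_one_mul]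

theorem index_eq_sign_det_general [FiniteDimensional ℝ V] {J : End ℝ V}
    (hJ : IsOrthogonalComplexStructure J) (A : V ≃ₗᵢ[ℝ] V) :
    (-1 : ℝ) ^ (finrank ℝ (LinearMap.ker (J + A.toLinearEquiv.conj J)) / 2) =
      Real.sign (LinearMap.det A.toLinearMap) := by
  induction hk : finrank ℝ (LinearMap.ker (J + A.toLinearEquiv.conj J))
    using Nat.strong_induction_on generalizing A with
  | _ k ih =>
  rcases eq_or_ne (LinearMap.ker (J + A.toLinearEquiv.conj J)) ⊥ with hbot | hbot
  · rw [Real.sign_of_pos (hJ.det_pos_of_ker_add_conj_eq_bot A hbot), ← hk, hbot, finrank_bot,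
      Nat.zero_div, pow_zero]
  · have := Submodule.nontrivial_iff_ne_bot.2 hbot
    obtain ⟨⟨v, hvK⟩, hv : ‖v‖ = 1⟩ :=
      exists_norm_eq (LinearMap.ker (J + A.toLinearEquiv.conj J)) zero_le_one
    have hdim := hJ.finrank_ker_add_conj_trans_reflection A hv hvK
    have hsign := ih _ (by lia) (A.trans (ℝ ∙ v)ᗮ.reflection) rfl
    rw [det_trans_reflection A (norm_ne_zero_iff.1 (hv ▸ one_ne_zero)), Real.sign_neg] at hsign
    rw [← hk, hdim, Nat.add_div_right _ two_pos, pow_succ, hsign, mul_neg_one, neg_neg]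

end InnerProductSpace

section Matrix

variable {n : Type*} [Fintype n] [DecidableEq n]

theorem isOrthogonalComplexStructure_toEuclideanLin {J : Matrix n n ℝ} (hskew : Jᵀ = -J)
    (horth : J * Jᵀ = 1) : IsOrthogonalComplexStructure (toEuclideanLin J) where
  mul_self := by
    rw [hskew, mul_neg, neg_eq_iff_eq_neg] at horth
    change toEuclideanLin J ∘ₗ toEuclideanLin J = _
    rw [← toLpLin_mul_same, horth, map_neg, toLpLin_one]
    rfl
  isSkewAdjoint x y := by
    have := (toEuclideanLin J).adjoint_inner_right x y
    rw [← toEuclideanLin_conjTranspose_eq_adjoint, conjTranspose_eq_transpose_of_trivial,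
      hskew, map_neg] at this
    exact this.symm

/-- The linear isometry equivalence of Euclidean space given by an orthogonal matrix; it translates
statements about isometries of an inner product space into statements about matrices. -/
noncomputable def orthogonalIsometry (A : orthogonalGroup n ℝ) :
    EuclideanSpace ℝ n ≃ₗᵢ[ℝ] EuclideanSpace ℝ n :=
  Unitary.linearIsometryEquiv
    ⟨toEuclideanCLM (𝕜 := ℝ) (A : Matrix n n ℝ), Unitary.map_mem (toEuclideanCLM (𝕜 := ℝ)) A.2⟩

theorem toLinearMap_orthogonalIsometry (A : orthogonalGroup n ℝ) :
    (orthogonalIsometry A).toLinearMap = toEuclideanLin (A : Matrix n n ℝ) :=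
  rfl

theorem conj_orthogonalIsometry (A : orthogonalGroup n ℝ) (M : Matrix n n ℝ) :
    (orthogonalIsometry A).toLinearEquiv.conj (toEuclideanLin M) =
      toEuclideanLin ((A : Matrix n n ℝ) * M * (A : Matrix n n ℝ)ᵀ) := by
  have symm_eq : ((orthogonalIsometry A).symm.toLinearMap : End ℝ (EuclideanSpace ℝ n)) =
      toEuclideanLin (A : Matrix n n ℝ)ᵀ := by
    rw [← conjTranspose_eq_transpose_of_trivial, ← star_eq_conjTranspose]
    exact congrArg ContinuousLinearMap.toLinearMap
      (map_star (toEuclideanCLM (𝕜 := ℝ)) (A : Matrix n n ℝ)).symm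
  rw [toLpLin_mul_same, toLpLin_mul_same, ← symm_eq]
  rfl

theorem finrank_ker_toEuclideanLin {m : Type*} (M : Matrix m n ℝ) :
    finrank ℝ (LinearMap.ker (toEuclideanLin M)) = finrank ℝ (LinearMap.ker M.mulVecLin) := by
  let e : EuclideanSpace ℝ n ≃ₗ[ℝ] (n → ℝ) := WithLp.linearEquiv 2 ℝ (n → ℝ)
  have ker_eq : LinearMap.ker (toEuclideanLin M) =
      (LinearMap.ker M.mulVecLin).comap e.toLinearMap := by
    ext x
    simp [e, toLpLin_apply]
  rw [ker_eq]
  exact (e.ofSubmodule' _).finrank_eq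

end Matrix

/-- Let `J₀` be a skew-symmetric orthogonal matrix on `ℝ^{2L}` (so `J₀ᵀ = -J₀`
and `J₀² = -1`) and let `A ∈ O(2L)` be an orthogonal matrix with `J₁ = A J₀ Aᵀ`.
Then `(-1) ^ ((1/2) * dim ker (J₀ + J₁)) = sgn (det A)`. -/
theorem index_eq_sign_det {L : ℕ} (J₀ A : Matrix (Fin (2 * L)) (Fin (2 * L)) ℝ)
    (hJskew : J₀ᵀ = -J₀) (hJorth : J₀ * J₀ᵀ = 1)
    (hAorth : A * Aᵀ = 1) :
    (-1 : ℝ) ^ (Module.finrank ℝ (LinearMap.ker (J₀ + A * J₀ * Aᵀ).mulVecLin) / 2)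
      = Real.sign A.det := by
  have h := index_eq_sign_det_general (isOrthogonalComplexStructure_toEuclideanLin hJskew hJorth)
    (orthogonalIsometry ⟨A, (mem_orthogonalGroup_iff _ _).2 hAorth⟩)
  rwa [conj_orthogonalIsometry, toLinearMap_orthogonalIsometry, ← map_add,
    finrank_ker_toEuclideanLin, LinearMap.det_toLpLin] at h
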